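/- Let G be a finite group, M ≤ G a subgroup, T ≤ G an abelian subgroup contained in the normalizer N_G(M), and r ∈ T. Suppose there exists s ∈ O_r^G ∩ T with s ∉ O_r^M, and let H be the subgroup of G generated by M ∪ {r, s}. Then the conjugation orbits O_s^H and O_r^H are distinct. -/

import Mathlib

/-- The orbit of `g` under conjugation by the subgroup `H` of `G`. -/
def convOrbit {G : Type*} [Group G] (H : Subgroup G) (g : G) : Set G :=
  (fun h => h * g * h⁻¹) '' (H : Set G)

open scoped Pointwise

section convOrbit

variable {G : Type*} [Group G]

theorem mem_convOrbit_self (H : Subgroup G) (g : G) : g ∈ convOrbit H g :=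
  ⟨1, H.one_mem, by simp⟩

theorem convOrbit_mono {H K : Subgroup G} (hHK : H ≤ K) (g : G) :
    convOrbit H g ⊆ convOrbit K g :=
  Set.image_mono hHK

theorem convOrbit_sup_of_le_centralizer {M T : Subgroup G} {g : G}
    (hTM : T ≤ Subgroup.normalizer (M : Set G)) (hTg : T ≤ Subgroup.centralizer {g}) :
    convOrbit (M ⊔ T) g = convOrbit M g := by
  refine (Set.image_subset_iff.2 fun h hh => ?_).antisymm (convOrbit_mono le_sup_left g)
  have hMT : h ∈ (M : Set G) * (T : Set G) := by
    rwa [← Subgroup.coe_mul_of_right_le_normalizer_left M T hTM]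
  obtain ⟨m, hm, t, ht, rfl⟩ := Set.mem_mul.1 hMT
  have htg : t * g = g * t := Subgroup.mem_centralizer_singleton_iff.1 (hTg ht)
  refine ⟨m, hm, ?_⟩
  calc m * g * m⁻¹ = m * (g * t) * t⁻¹ * m⁻¹ := by group
    _ = m * t * g * (m * t)⁻¹ := by rw [← htg]; group

theorem convOrbit_closure_union_of_subset_centralizer {M : Subgroup G} {S : Set G} {g : G}
    (hSM : S ⊆ Subgroup.normalizer (M : Set G)) (hSg : S ⊆ Subgroup.centralizer {g}) :
    convOrbit (Subgroup.closure ((M : Set G) ∪ S)) g = convOrbit M g := by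
  rw [Subgroup.closure_union, Subgroup.closure_eq]
  exact convOrbit_sup_of_le_centralizer ((Subgroup.closure_le _).2 hSM)
    ((Subgroup.closure_le _).2 hSg)

theorem stmt2_general {M : Subgroup G} {r s : G}
    (hrM : r ∈ Subgroup.normalizer (M : Set G)) (hsM : s ∈ Subgroup.normalizer (M : Set G))
    (hrs : Commute r s) (hs : s ∉ convOrbit M r) :
    convOrbit (Subgroup.closure ((M : Set G) ∪ {r, s})) s ≠
      convOrbit (Subgroup.closure ((M : Set G) ∪ {r, s})) r := by
  have normalizes : {r, s} ⊆ (Subgroup.normalizer (M : Set G) : Set G) :=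
    Set.pair_subset hrM hsM
  have centralizes : {r, s} ⊆ (Subgroup.centralizer {r} : Set G) :=
    Set.pair_subset (Subgroup.mem_centralizer_singleton_iff.2 rfl)
      (Subgroup.mem_centralizer_singleton_iff.2 hrs.symm.eq)
  intro orbits_eq
  apply hs
  rw [← convOrbit_closure_union_of_subset_centralizer normalizes centralizes, ← orbits_eq]
  exact mem_convOrbit_self _ s

end convOrbit

/-- Lemma: let `M ≤ G`, `T ≤ N_G(M)` abelian, `r ∈ T`, and suppose there is
`s ∈ O_r^G ∩ T` with `s ∉ O_r^M`.  If `H = ⟨M ∪ {r, s}⟩`, then `O_s^H ≠ O_r^H`. -/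
theorem stmt2 {G : Type*} [Group G] [Finite G] (M T : Subgroup G)
    (hT : T ≤ Subgroup.normalizer (M : Set G)) (hTab : ∀ a ∈ T, ∀ b ∈ T, a * b = b * a)
    (r : G) (hr : r ∈ T)
    (s : G) (hs : s ∈ convOrbit (⊤ : Subgroup G) r) (hsT : s ∈ T)
    (hsM : s ∉ convOrbit M r) :
    convOrbit (Subgroup.closure ((M : Set G) ∪ {r, s})) s ≠
      convOrbit (Subgroup.closure ((M : Set G) ∪ {r, s})) r :=
  stmt2_general (hT hr) (hT hsT) (hTab r hr s hsT) hsM
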